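/- arXiv:2311.09992 — 3 statements merged into one kernel-verified Lean document; each statement's English description precedes it below -/
import Mathlib

section
/- (Main Theorem, case q a prime power) Let q ≥ 2 be an integer which is a power of a prime. Then for every parameter tuple (n,m,k,l) as in the context and every x ∈ {0,1,…,m}, one has p(x;q) ≥ 0; consequently, since Σ_{x=0}^{m} p(x;q) = 1, the function x ↦ p(x;q) is the probability mass function of a probability distribution (the q-Racah probability distribution P_{n,m,k,l;q}) on the finite set {0,1,…,m}. -/
open Finset

/-- The `q`-integer `[j]_q = 1 + q + ⋯ + q^(j-1)`. -/
noncomputable def qint (q : ℝ) (j : ℕ) : ℝ := ∑ i ∈ Finset.range j, q ^ i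

/-- The `q`-factorial `[j]_q! = [1]_q [2]_q ⋯ [j]_q`. -/
noncomputable def qfact (q : ℝ) (j : ℕ) : ℝ := ∏ i ∈ Finset.range j, qint q (i + 1)

/-- The `q`-binomial coefficient `C_q(a,b)`. -/
noncomputable def qbinom (q : ℝ) (a b : ℕ) : ℝ :=
  if b ≤ a then qfact q a / (qfact q b * qfact q (a - b)) else 0

/-- The `q`-Pochhammer symbol `(a;q)_r = (1-a)(1-aq)⋯(1-aq^(r-1))`. -/
noncomputable def qpoch (a q : ℝ) (r : ℕ) : ℝ := ∏ i ∈ Finset.range r, (1 - a * q ^ i)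

/-- The `r`-th term of the terminating balanced `₄φ₃`-series with numerator parameters
`q^a, q^b, q^(-M), q^(-N)`, denominator parameters `q^(-m), q^(m-n), q^(-M-N)`,
base `q` and argument `q`. -/
noncomputable def hypTerm (q : ℝ) (n m M N : ℕ) (a b : ℤ) (r : ℕ) : ℝ :=
  (qpoch (q ^ a) q r * qpoch (q ^ b) q r * qpoch (q ^ (-(M : ℤ))) q r *
      qpoch (q ^ (-(N : ℤ))) q r * q ^ r) /
    (qpoch q q r * qpoch (q ^ (-(m : ℤ))) q r * qpoch (q ^ ((m : ℤ) - n)) q r *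
      qpoch (q ^ (-(M : ℤ) - N)) q r)

/-- The function `p(x;q)` of Definition 1.1 (in its `₄φ₃`-series form), with
`M = m - l` and `N = n - m - k + l`. -/
noncomputable def pq (q : ℝ) (n m k l x : ℕ) : ℝ :=
  qbinom q (n - k) (m - l) * (qbinom q n x / qbinom q n m) * q ^ x *
    (qint q (n - 2 * x + 1) / qint q (n - x + 1)) *
    ∑ r ∈ Finset.range (min x (min (m - l) (n + l - m - k)) + 1),
      hypTerm q n m (m - l) (n + l - m - k) (-(x : ℤ)) ((x : ℤ) - n - 1) r

/-!
Positivity: `[n-m+1] [n-2x] φ(n+1, x+1) = [n-x+1] [n-m-x] φ(n, x+1) + q^(n-m-x) [x+1] [m-x] φ(n, x)`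
is a contiguous relation for the series `φ`, with `m`, `M`, `N` fixed and nonnegative coefficients.
Together with the symmetry `(m, M, N) ↔ (n-m, N, M)` it lowers `n` down to `m = M`, `n = M + N`,
where `φ` collapses to a `₂φ₁` that vanishes by `q`-Chu–Vandermonde unless `x = 0`.

Total mass: in the double sum over `x` and `r` the sum over `x` telescopes, and what is left is a
`₂φ₁` whose value is the reciprocal of the factor `C_q(n-k, m-l)`.
-/

section qAnalogues

variable {q : ℝ}

lemma qint_zero (q : ℝ) : qint q 0 = 0 :=
  Finset.sum_range_zero _

lemma qint_mul_sub_one (q : ℝ) (j : ℕ) : qint q j * (q - 1) = q ^ j - 1 :=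
  geom_sum_mul q j

lemma qint_nonneg (hq : 0 ≤ q) (j : ℕ) : 0 ≤ qint q j :=
  Finset.sum_nonneg fun i _ => pow_nonneg hq i

lemma qint_pos (hq : 0 ≤ q) {j : ℕ} (hj : j ≠ 0) : 0 < qint q j :=
  geom_sum_pos hq hj

lemma qfact_pos (hq : 0 ≤ q) (j : ℕ) : 0 < qfact q j :=
  Finset.prod_pos fun i _ => qint_pos hq i.succ_ne_zero

lemma qfact_zero (q : ℝ) : qfact q 0 = 1 :=
  Finset.prod_range_zero _

lemma qfact_succ (q : ℝ) (j : ℕ) : qfact q (j + 1) = qfact q j * qint q (j + 1) :=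
  Finset.prod_range_succ _ _

lemma qbinom_pos (hq : 0 ≤ q) {a b : ℕ} (h : b ≤ a) : 0 < qbinom q a b := by
  rw [qbinom, if_pos h]
  exact div_pos (qfact_pos hq _) (mul_pos (qfact_pos hq _) (qfact_pos hq _))

lemma qbinom_add (q : ℝ) (a b : ℕ) :
    qbinom q (a + b) a = qfact q (a + b) / (qfact q a * qfact q b) := by
  rw [qbinom, if_pos (Nat.le_add_right a b), Nat.add_sub_cancel_left]

lemma qbinom_mul_qint (hq : 0 ≤ q) (a b : ℕ) :
    qbinom q (a + 1 + b) a * qint q (b + 1) = qbinom q (a + 1 + b) (a + 1) * qint q (a + 1) := by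
  have ha := (qfact_pos hq a).ne'
  have hb := (qfact_pos hq b).ne'
  have ha' := (qint_pos hq a.succ_ne_zero).ne'
  have hb' := (qint_pos hq b.succ_ne_zero).ne'
  rw [qbinom_add, show a + 1 + b = a + (b + 1) by ring, qbinom_add, qfact_succ q a, qfact_succ q b]
  field_simp

lemma qbinom_succ_mul_qint (hq : 0 ≤ q) (a b : ℕ) :
    qbinom q (a + 1 + b) (a + 1) * qint q (a + 1) = qint q (a + 1 + b) * qbinom q (a + b) a := by
  have ha := (qfact_pos hq a).ne'
  have hb := (qfact_pos hq b).ne'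
  have ha' := (qint_pos hq a.succ_ne_zero).ne'
  rw [qbinom_add, qbinom_add, show a + 1 + b = a + b + 1 by ring, qfact_succ, qfact_succ]
  field_simp

lemma zpow_neg_succ_mul (hq : q ≠ 0) (j : ℕ) :
    q ^ (-((j + 1 : ℕ) : ℤ)) * q = q ^ (-(j : ℤ)) := by
  rw [← zpow_add_one₀ hq]
  congr 1
  omega

lemma one_sub_zpow_neg_mul_pow (hq : q ≠ 0) (j : ℕ) :
    (1 - q ^ (-(j : ℤ))) * q ^ j = qint q j * (q - 1) := by
  rw [qint_mul_sub_one, zpow_neg, zpow_natCast]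
  field_simp

end qAnalogues

section qPochhammer

variable {a q : ℝ} {r : ℕ}

lemma qpoch_zero (a q : ℝ) : qpoch a q 0 = 1 :=
  Finset.prod_range_zero _

lemma qpoch_succ (a q : ℝ) (r : ℕ) : qpoch a q (r + 1) = qpoch a q r * (1 - a * q ^ r) :=
  Finset.prod_range_succ _ _

lemma qpoch_succ' (a q : ℝ) (r : ℕ) : qpoch a q (r + 1) = (1 - a) * qpoch (a * q) q r := by
  simp only [qpoch, Finset.prod_range_succ', pow_succ', pow_zero, mul_one, mul_assoc, mul_comm]

lemma one_sub_mul_qpoch_mul (a q : ℝ) (r : ℕ) :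
    (1 - a) * qpoch (a * q) q r = qpoch a q r * (1 - a * q ^ r) := by
  rw [← qpoch_succ', qpoch_succ]

lemma qpoch_ne_zero_of_le {s : ℕ} (hrs : r ≤ s) (h : qpoch a q s ≠ 0) : qpoch a q r ≠ 0 := by
  rw [qpoch, Finset.prod_ne_zero_iff] at h ⊢
  exact fun i hi => h i (Finset.range_mono hrs hi)

lemma qpoch_zpow_neg_eq_zero (hq : q ≠ 0) {x : ℕ} (h : x < r) :
    qpoch (q ^ (-(x : ℤ))) q r = 0 := by
  refine Finset.prod_eq_zero (Finset.mem_range.2 h) ?_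
  rw [zpow_neg, zpow_natCast, inv_mul_cancel₀ (pow_ne_zero x hq), sub_self]

lemma qpoch_zpow_ne_zero (hq₀ : 0 < q) (hq₁ : q ≠ 1) {e : ℤ} (h : e + r ≤ 0) :
    qpoch (q ^ e) q r ≠ 0 := by
  refine Finset.prod_ne_zero_iff.2 fun i hi => sub_ne_zero.2 (Ne.symm ?_)
  have hi := Finset.mem_range.1 hi
  rw [← zpow_natCast q i, ← zpow_add₀ hq₀.ne', Ne, zpow_eq_one_iff_right₀ hq₀.le hq₁]
  omega

lemma qpoch_self_ne_zero (hq₀ : 0 < q) (hq₁ : q ≠ 1) (r : ℕ) : qpoch q q r ≠ 0 := by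
  refine Finset.prod_ne_zero_iff.2 fun i _ => sub_ne_zero.2 (Ne.symm ?_)
  rw [← pow_succ', Ne, pow_eq_one_iff_of_ne_zero i.succ_ne_zero]
  rintro (h | ⟨h, -⟩)
  · exact hq₁ h
  · linarith

lemma qint_mul_qpoch_zpow_neg (hq : q ≠ 0) (j r : ℕ) :
    qint q (j + 1) * (q - 1) * qpoch (q ^ (-(j : ℤ))) q r =
      (q ^ (j + 1) - q ^ r) * qpoch (q ^ (-((j + 1 : ℕ) : ℤ))) q r := by
  have hshift := one_sub_mul_qpoch_mul (q ^ (-((j + 1 : ℕ) : ℤ))) q r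
  have hcancel : q ^ (-((j + 1 : ℕ) : ℤ)) * q ^ (j + 1) = 1 := by
    rw [zpow_neg, zpow_natCast, inv_mul_cancel₀ (pow_ne_zero _ hq)]
  rw [zpow_neg_succ_mul hq] at hshift
  rw [qint_mul_sub_one]
  linear_combination q ^ (j + 1) * hshift + (qpoch (q ^ (-(j : ℤ))) q r -
    q ^ r * qpoch (q ^ (-((j + 1 : ℕ) : ℤ))) q r) * hcancel

lemma qbinom_mul_qpoch_zpow_neg (hq : 0 < q) (a b : ℕ) :
    qbinom q (a + b) a * qpoch (q ^ (-(a : ℤ))) q a =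
      qpoch (q ^ (-((a + b : ℕ) : ℤ))) q a * (q ^ b) ^ a := by
  induction a with
  | zero => simp [qpoch_zero, qbinom, (qfact_pos hq.le b).ne', qfact_zero]
  | succ a ih =>
    have hbinom := qbinom_succ_mul_qint hq.le a b
    have hfactor := one_sub_zpow_neg_mul_pow hq.ne' (a + 1)
    have hfactor' := one_sub_zpow_neg_mul_pow hq.ne' (a + b + 1)
    rw [add_right_comm a 1 b] at hbinom ⊢
    rw [qpoch_succ', zpow_neg_succ_mul hq.ne', qpoch_succ', zpow_neg_succ_mul hq.ne']
    apply mul_right_cancel₀ (pow_ne_zero (a + 1) hq.ne')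
    linear_combination
      qbinom q (a + b + 1) (a + 1) * qpoch (q ^ (-(a : ℤ))) q a * hfactor +
      (q - 1) * qpoch (q ^ (-(a : ℤ))) q a * hbinom + qint q (a + b + 1) * (q - 1) * ih -
      qpoch (q ^ (-((a + b : ℕ) : ℤ))) q a * (q ^ b) ^ a * hfactor'

lemma qint_mul_qpoch_div_contiguous (hq₀ : 0 < q) (hq₁ : q ≠ 1) {s t x : ℕ} (hr : r ≤ x + t) :
    qint q (x + t + 1) * qint q (s + t) *
        (qpoch (q ^ (-((x + 1 : ℕ) : ℤ))) q r * qpoch (q ^ (-((x + s + t + 1 : ℕ) : ℤ))) q r /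
          qpoch (q ^ (-((x + t + 1 : ℕ) : ℤ))) q r) =
      qint q (x + s + t + 1) * qint q t *
          (qpoch (q ^ (-((x + 1 : ℕ) : ℤ))) q r * qpoch (q ^ (-((x + s + t : ℕ) : ℤ))) q r /
            qpoch (q ^ (-((x + t : ℕ) : ℤ))) q r) +
        q ^ t * qint q (x + 1) * qint q s *
          (qpoch (q ^ (-(x : ℤ))) q r * qpoch (q ^ (-((x + s + t + 1 : ℕ) : ℤ))) q r /
            qpoch (q ^ (-((x + t : ℕ) : ℤ))) q r) := by
  have hX := qint_mul_qpoch_zpow_neg hq₀.ne' x r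
  have hY := qint_mul_qpoch_zpow_neg hq₀.ne' (x + s + t) r
  have hZ := qint_mul_qpoch_zpow_neg hq₀.ne' (x + t) r
  have hZ₀ : qpoch (q ^ (-((x + t : ℕ) : ℤ))) q r ≠ 0 := qpoch_zpow_ne_zero hq₀ hq₁ (by omega)
  have hZ₁ : qpoch (q ^ (-((x + t + 1 : ℕ) : ℤ))) q r ≠ 0 :=
    qpoch_zpow_ne_zero hq₀ hq₁ (by omega)
  have hs := qint_mul_sub_one q s
  have ht := qint_mul_sub_one q t
  have hst := qint_mul_sub_one q (s + t)
  rw [show q ^ (x + s + t + 1) = q ^ (x + 1) * q ^ s * q ^ t by ring] at hY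
  rw [show q ^ (x + t + 1) = q ^ (x + 1) * q ^ t by ring] at hZ
  rw [pow_add] at hst
  generalize qpoch (q ^ (-((x + t : ℕ) : ℤ))) q r = Z₀ at *
  generalize qpoch (q ^ (-((x + t + 1 : ℕ) : ℤ))) q r = Z₁ at *
  generalize qpoch (q ^ (-((x + 1 : ℕ) : ℤ))) q r = X₁ at *
  generalize qpoch (q ^ (-((x + s + t + 1 : ℕ) : ℤ))) q r = Y₁ at *
  have hq : (q - 1) ^ 2 ≠ 0 := pow_ne_zero 2 (sub_ne_zero.2 hq₁)
  field_simp
  apply mul_left_cancel₀ hq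
  generalize q ^ (x + 1) = a, q ^ s = b, q ^ t = c at *
  linear_combination (q - 1) * qint q (s + t) * X₁ * Y₁ * hZ -
    (q - 1) * qint q t * X₁ * Z₁ * hY - (q - 1) * c * qint q s * Y₁ * Z₁ * hX +
    (a * c - q ^ r) * X₁ * Y₁ * Z₁ * hst - (a * b * c - q ^ r) * X₁ * Y₁ * Z₁ * ht -
    c * (a - q ^ r) * X₁ * Y₁ * Z₁ * hs

end qPochhammer

section ChuVandermonde

/-- The `r`-th term of the basic hypergeometric series `₂φ₁(a, b; c; q, q)`. -/
noncomputable def twoPhiOneTerm (q a b c : ℝ) (r : ℕ) : ℝ :=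
  qpoch a q r * qpoch b q r * q ^ r / (qpoch q q r * qpoch c q r)

variable {q b c : ℝ}

lemma twoPhiOneTerm_succ_sub (a b : ℝ) {r : ℕ} (hq : qpoch q q (r + 1) ≠ 0)
    (hc : qpoch c q (r + 1) ≠ 0) :
    twoPhiOneTerm q a b c (r + 1) - twoPhiOneTerm q (a * q) b c (r + 1) =
      -(a * q * (1 - b) / (1 - c)) * twoPhiOneTerm q (a * q) (b * q) (c * q) r := by
  rw [qpoch_succ, mul_ne_zero_iff, mul_comm q] at hq
  rw [qpoch_succ', mul_ne_zero_iff] at hc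
  obtain ⟨hqr, hqr'⟩ := hq
  obtain ⟨hc₁, hcr⟩ := hc
  simp only [twoPhiOneTerm]
  rw [qpoch_succ' a, qpoch_succ (a * q), qpoch_succ' b, qpoch_succ' c, qpoch_succ q, pow_succ,
    mul_comm q (q ^ r)]
  generalize qpoch (a * q) q r = A, qpoch (b * q) q r = B, qpoch (c * q) q r = C at *
  field_simp
  ring

lemma sum_twoPhiOneTerm_sub (a b : ℝ) {n : ℕ} (hq : qpoch q q n ≠ 0) (hc : qpoch c q n ≠ 0) :
    ∑ r ∈ Finset.range (n + 1), twoPhiOneTerm q a b c r -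
        ∑ r ∈ Finset.range (n + 1), twoPhiOneTerm q (a * q) b c r =
      -(a * q * (1 - b) / (1 - c)) *
        ∑ r ∈ Finset.range n, twoPhiOneTerm q (a * q) (b * q) (c * q) r := by
  have hfirst (a : ℝ) : twoPhiOneTerm q a b c 0 = 1 := by simp [twoPhiOneTerm, qpoch_zero]
  rw [Finset.sum_range_succ', Finset.sum_range_succ', hfirst, hfirst, add_sub_add_right_eq_sub,
    ← Finset.sum_sub_distrib, Finset.mul_sum]
  refine Finset.sum_congr rfl fun r hr => ?_
  have hr : r + 1 ≤ n := Finset.mem_range.1 hr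
  exact twoPhiOneTerm_succ_sub a b (qpoch_ne_zero_of_le hr hq) (qpoch_ne_zero_of_le hr hc)

theorem qChuVandermonde (hq₀ : q ≠ 0) (n : ℕ) (hq : qpoch q q n ≠ 0) (hb : b ≠ 0)
    (hc : qpoch c q n ≠ 0) :
    ∑ r ∈ Finset.range (n + 1), twoPhiOneTerm q (q ^ (-(n : ℤ))) b c r =
      qpoch (c / b) q n * b ^ n / qpoch c q n := by
  induction n generalizing b c with
  | zero => simp [twoPhiOneTerm, qpoch_zero]
  | succ n ih =>
    have hqn := qpoch_ne_zero_of_le n.le_succ hq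
    have hcn := qpoch_ne_zero_of_le n.le_succ hc
    obtain ⟨hc₁, hcq⟩ := mul_ne_zero_iff.1 (qpoch_succ' c q n ▸ hc)
    obtain ⟨-, hcqn⟩ := mul_ne_zero_iff.1 (qpoch_succ c q n ▸ hc)
    have hlast : twoPhiOneTerm q (q ^ (-(n : ℤ))) b c (n + 1) = 0 := by
      rw [twoPhiOneTerm, qpoch_zpow_neg_eq_zero hq₀ n.lt_succ_self, zero_mul, zero_mul, zero_div]
    have hdiff := sum_twoPhiOneTerm_sub (q ^ (-((n + 1 : ℕ) : ℤ))) b hq hc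
    rw [zpow_neg_succ_mul hq₀, Finset.sum_range_succ (twoPhiOneTerm q (q ^ (-(n : ℤ))) b c), hlast,
      add_zero, ih hqn hb hcn, ih hqn (mul_ne_zero hb hq₀) hcq, mul_div_mul_right c b hq₀] at hdiff
    have hcshift : qpoch (c * q) q n = qpoch c q n * (1 - c * q ^ n) / (1 - c) := by
      rw [← one_sub_mul_qpoch_mul, mul_div_cancel_left₀ _ hc₁]
    rw [sub_eq_iff_eq_add.1 hdiff, qpoch_succ (c / b), qpoch_succ c, hcshift, mul_pow, zpow_neg,
      zpow_natCast, pow_succ b]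
    rw [mul_comm c] at hcqn
    field_simp
    ring

lemma sum_twoPhiOneTerm_eq_inv_qbinom (hq₀ : 0 < q) (hq₁ : q ≠ 1) (M N : ℕ) :
    ∑ r ∈ Finset.range (min M N + 1),
        twoPhiOneTerm q (q ^ (-(M : ℤ))) (q ^ (-(N : ℤ))) (q ^ (-(M : ℤ) - N)) r =
      (qbinom q (M + N) M)⁻¹ := by
  have hvanish (r : ℕ) (hr : min M N + 1 ≤ r) :
      twoPhiOneTerm q (q ^ (-(M : ℤ))) (q ^ (-(N : ℤ))) (q ^ (-(M : ℤ) - N)) r = 0 := by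
    rcases min_lt_iff.1 (Nat.lt_of_succ_le hr) with h | h <;>
      simp only [twoPhiOneTerm, qpoch_zpow_neg_eq_zero hq₀.ne' h, zero_mul, mul_zero, zero_div]
  have hden : qpoch (q ^ (-(M : ℤ) - N)) q M ≠ 0 := qpoch_zpow_ne_zero hq₀ hq₁ (by omega)
  have hbinom := (qbinom_pos hq₀.le (Nat.le_add_right M N)).ne'
  have hratio := qbinom_mul_qpoch_zpow_neg hq₀ M N
  rw [show -((M + N : ℕ) : ℤ) = -(M : ℤ) - N by omega] at hratio
  rw [← Finset.eventually_constant_sum hvanish (by omega : min M N + 1 ≤ M + 1),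
    qChuVandermonde hq₀.ne' M (qpoch_self_ne_zero hq₀ hq₁ M) (zpow_ne_zero _ hq₀.ne') hden,
    ← zpow_sub₀ hq₀.ne', show -(M : ℤ) - N - -(N : ℤ) = -(M : ℤ) by ring, zpow_neg q (N : ℤ),
    zpow_natCast, inv_pow]
  field_simp
  linear_combination hratio

end ChuVandermonde

section qRacah

/-- The terminating balanced series `₄φ₃(q^(-x), q^(x-n-1), q^(-M), q^(-N); q^(-m), q^(m-n),
q^(-M-N); q, q)`, truncated at `min x M N`, beyond which every term has numerator zero. -/
noncomputable def qRacahSum (q : ℝ) (n m M N x : ℕ) : ℝ :=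
  ∑ r ∈ Finset.range (min x (min M N) + 1), hypTerm q n m M N (-(x : ℤ)) ((x : ℤ) - n - 1) r

/-- The factor of `p(x;q)` that depends on `x` and `n` alone. For `1 ≤ x` and `2x ≤ n` it is the
difference `C_q(n,x) - C_q(n,x-1)`. -/
noncomputable def qRacahWeight (q : ℝ) (n x : ℕ) : ℝ :=
  qbinom q n x * q ^ x * (qint q (n - 2 * x + 1) / qint q (n - x + 1))

variable {q : ℝ} {n m k l M N x : ℕ}

lemma pq_eq_qRacahWeight_mul_qRacahSum (q : ℝ) (n m k l x : ℕ) :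
    pq q n m k l x = qbinom q (n - k) (m - l) / qbinom q n m *
      (qRacahWeight q n x * qRacahSum q n m (m - l) (n + l - m - k) x) := by
  rw [pq, qRacahWeight, qRacahSum]
  ring

lemma hypTerm_eq_twoPhiOneTerm_mul (q : ℝ) (n m M N : ℕ) (a b : ℤ) (r : ℕ) :
    hypTerm q n m M N a b r =
      twoPhiOneTerm q (q ^ (-(M : ℤ))) (q ^ (-(N : ℤ))) (q ^ (-(M : ℤ) - N)) r *
        (qpoch (q ^ a) q r * qpoch (q ^ b) q r /
          (qpoch (q ^ (-(m : ℤ))) q r * qpoch (q ^ ((m : ℤ) - n)) q r)) := by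
  rw [hypTerm, twoPhiOneTerm]
  ring

lemma hypTerm_symm (q : ℝ) (M N : ℕ) (a b : ℤ) (r : ℕ) (hmn : m ≤ n) :
    hypTerm q n m M N a b r = hypTerm q n (n - m) N M a b r := by
  simp only [hypTerm, Nat.cast_sub hmn, neg_sub, sub_sub_cancel_left, neg_sub_left, add_comm]
  ring

lemma hypTerm_eq_zero (hq : q ≠ 0) (n m : ℕ) (b : ℤ) {r : ℕ} (h : min x (min M N) < r) :
    hypTerm q n m M N (-(x : ℤ)) b r = 0 := by
  simp only [min_lt_iff] at h
  rcases h with h | h | h <;>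
    simp only [hypTerm, qpoch_zpow_neg_eq_zero hq h, zero_mul, mul_zero, zero_div]

lemma qRacahSum_eq_sum_range_min (hq : q ≠ 0) (n m M N x : ℕ) :
    qRacahSum q n m M N x =
      ∑ r ∈ Finset.range (min M N + 1), hypTerm q n m M N (-(x : ℤ)) ((x : ℤ) - n - 1) r :=
  (Finset.eventually_constant_sum (fun _ hr => hypTerm_eq_zero hq n m _ hr) (by omega)).symm

lemma qRacahSum_zero (q : ℝ) (n m M N : ℕ) : qRacahSum q n m M N 0 = 1 := by
  simp [qRacahSum, hypTerm, qpoch_zero]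

lemma qRacahSum_symm (q : ℝ) (M N x : ℕ) (hmn : m ≤ n) :
    qRacahSum q n m M N x = qRacahSum q n (n - m) N M x := by
  simp only [qRacahSum, min_comm N M, hypTerm_symm q M N _ _ _ hmn]

lemma qRacahSum_add_eq_zero (hq₀ : 0 < q) (hq₁ : q ≠ 1) (hx : x ≠ 0) (hxM : x ≤ M)
    (hxN : x ≤ N) : qRacahSum q (M + N) M M N x = 0 := by
  set b := q ^ ((x : ℤ) - (M + N : ℕ) - 1) with hb
  set c := q ^ (-(M : ℤ) - N) with hc
  have hcb : c / b = q ^ (-((x - 1 : ℕ) : ℤ)) := by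
    rw [hb, hc, ← zpow_sub₀ hq₀.ne']; congr 1; omega
  have hterm : ∀ r ∈ Finset.range (x + 1), hypTerm q (M + N) M M N (-(x : ℤ))
      ((x : ℤ) - (M + N : ℕ) - 1) r = twoPhiOneTerm q (q ^ (-(x : ℤ))) b c r := by
    intro r hr
    have hr := Finset.mem_range.1 hr
    have hM : qpoch (q ^ (-(M : ℤ))) q r ≠ 0 := qpoch_zpow_ne_zero hq₀ hq₁ (by omega)
    have hN : qpoch (q ^ (-(N : ℤ))) q r ≠ 0 := qpoch_zpow_ne_zero hq₀ hq₁ (by omega)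
    rw [hypTerm, twoPhiOneTerm, show (M : ℤ) - (M + N : ℕ) = -(N : ℤ) by push_cast; ring]
    rw [← hb, ← hc]
    field_simp
  rw [qRacahSum, min_eq_left (le_min hxM hxN), Finset.sum_congr rfl hterm,
    qChuVandermonde hq₀.ne' x (qpoch_self_ne_zero hq₀ hq₁ x) (zpow_ne_zero _ hq₀.ne')
      (qpoch_zpow_ne_zero hq₀ hq₁ (by omega)), hcb,
    qpoch_zpow_neg_eq_zero hq₀.ne' (by omega), zero_mul, zero_div]

lemma hypTerm_contiguous (hq₀ : 0 < q) (hq₁ : q ≠ 1) (M N : ℕ) {r : ℕ} (hr : r + m ≤ n)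
    (hxm : x ≤ m) (hxn : x + m ≤ n) :
    qint q (n - m + 1) * qint q (n - 2 * x) *
        hypTerm q (n + 1) m M N (-((x + 1 : ℕ) : ℤ)) (((x + 1 : ℕ) : ℤ) - (n + 1 : ℕ) - 1) r =
      qint q (n - x + 1) * qint q (n - m - x) *
          hypTerm q n m M N (-((x + 1 : ℕ) : ℤ)) (((x + 1 : ℕ) : ℤ) - n - 1) r +
        q ^ (n - m - x) * qint q (x + 1) * qint q (m - x) *
          hypTerm q n m M N (-(x : ℤ)) ((x : ℤ) - n - 1) r := by
  obtain ⟨s, rfl⟩ := Nat.exists_eq_add_of_le hxm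
  obtain ⟨t, rfl⟩ := Nat.exists_eq_add_of_le hxn
  have hpoch := qint_mul_qpoch_div_contiguous hq₀ hq₁ (r := r) (s := s) (t := t) (x := x) (by omega)
  simp only [hypTerm_eq_twoPhiOneTerm_mul]
  rw [show x + (x + s) + t - (x + s) + 1 = x + t + 1 by omega,
    show x + (x + s) + t - 2 * x = s + t by omega,
    show x + (x + s) + t - x + 1 = x + s + t + 1 by omega,
    show x + (x + s) + t - (x + s) - x = t by omega, Nat.add_sub_cancel_left,
    show ((x + 1 : ℕ) : ℤ) - (x + (x + s) + t + 1 : ℕ) - 1 = -((x + s + t + 1 : ℕ) : ℤ) by omega,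
    show ((x + 1 : ℕ) : ℤ) - (x + (x + s) + t : ℕ) - 1 = -((x + s + t : ℕ) : ℤ) by omega,
    show (x : ℤ) - (x + (x + s) + t : ℕ) - 1 = -((x + s + t + 1 : ℕ) : ℤ) by omega,
    show ((x + s : ℕ) : ℤ) - (x + (x + s) + t + 1 : ℕ) = -((x + t + 1 : ℕ) : ℤ) by omega,
    show ((x + s : ℕ) : ℤ) - (x + (x + s) + t : ℕ) = -((x + t : ℕ) : ℤ) by omega]
  linear_combination
    twoPhiOneTerm q (q ^ (-(M : ℤ))) (q ^ (-(N : ℤ))) (q ^ (-(M : ℤ) - N)) r /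
      qpoch (q ^ (-((x + s : ℕ) : ℤ))) q r * hpoch

lemma qRacahSum_contiguous (hq₀ : 0 < q) (hq₁ : q ≠ 1) (M : ℕ) (hN : N + m ≤ n) (hxm : x ≤ m)
    (hxn : x + m ≤ n) :
    qint q (n - m + 1) * qint q (n - 2 * x) * qRacahSum q (n + 1) m M N (x + 1) =
      qint q (n - x + 1) * qint q (n - m - x) * qRacahSum q n m M N (x + 1) +
        q ^ (n - m - x) * qint q (x + 1) * qint q (m - x) * qRacahSum q n m M N x := by
  simp only [qRacahSum_eq_sum_range_min hq₀.ne', Finset.mul_sum, ← Finset.sum_add_distrib]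
  refine Finset.sum_congr rfl fun r hr => ?_
  have hr : r < min M N + 1 := Finset.mem_range.1 hr
  exact hypTerm_contiguous hq₀ hq₁ M N (by omega) hxm hxn

lemma qRacahSum_succ_nonneg (hq₀ : 0 < q) (hq₁ : q ≠ 1) (hN : N + m ≤ n)
    (ih : ∀ y ≤ m, y + m ≤ n → 0 ≤ qRacahSum q n m M N y) (hxm : x ≤ m) (hxn : x + m ≤ n + 1) :
    0 ≤ qRacahSum q (n + 1) m M N x := by
  obtain _ | x := x
  · exact (qRacahSum_zero q _ _ _ _).symm ▸ zero_le_one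
  have hlead : 0 < qint q (n - m + 1) * qint q (n - 2 * x) :=
    mul_pos (qint_pos hq₀.le (by omega)) (qint_pos hq₀.le (by omega))
  have hsame : 0 ≤ qint q (n - m - x) * qRacahSum q n m M N (x + 1) := by
    obtain hxn | hxn : x + m = n ∨ x + 1 + m ≤ n := by omega
    · rw [show n - m - x = 0 by omega, qint_zero, zero_mul]
    · exact mul_nonneg (qint_nonneg hq₀.le _) (ih _ hxm hxn)
  have hlower : 0 ≤ qRacahSum q n m M N x := ih x (by omega) (by omega)
  rw [← mul_nonneg_iff_of_pos_left hlead,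
    qRacahSum_contiguous hq₀ hq₁ M hN (by omega) (by omega), mul_assoc (qint q (n - x + 1))]
  have hqint := qint_nonneg hq₀.le
  exact add_nonneg (mul_nonneg (hqint _) hsame) (mul_nonneg (mul_nonneg (mul_nonneg
    (pow_nonneg hq₀.le _) (hqint _)) (hqint _)) hlower)

theorem qRacahSum_nonneg (hq₀ : 0 < q) (hq₁ : q ≠ 1) (hM : M ≤ m) (hN : N + m ≤ n) (hxm : x ≤ m)
    (hxn : x + m ≤ n) : 0 ≤ qRacahSum q n m M N x := by
  induction n generalizing m M N x with
  | zero =>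
    obtain rfl : x = 0 := by omega
    exact (qRacahSum_zero q _ _ _ _).symm ▸ zero_le_one
  | succ n ih =>
    obtain hNn | hNn : N + m ≤ n ∨ n + 1 = m + N := by omega
    · exact qRacahSum_succ_nonneg hq₀ hq₁ hNn (fun y => ih hM hNn) hxm hxn
    obtain hMm | rfl := hM.lt_or_eq
    · rw [qRacahSum_symm q M N x (by omega), show n + 1 - m = N by omega]
      exact qRacahSum_succ_nonneg hq₀ hq₁ (by omega) (fun y => ih le_rfl (by omega)) (by omega)
        (by omega)
    obtain rfl | hx := eq_or_ne x 0
    · exact (qRacahSum_zero q _ _ _ _).symm ▸ zero_le_one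
    · rw [hNn, qRacahSum_add_eq_zero hq₀ hq₁ hx hxm (by omega)]

lemma qRacahWeight_nonneg (hq : 0 ≤ q) (hx : x ≤ n) : 0 ≤ qRacahWeight q n x :=
  mul_nonneg (mul_nonneg (qbinom_pos hq hx).le (pow_nonneg hq x))
    (div_nonneg (qint_nonneg hq _) (qint_nonneg hq _))

lemma qRacahWeight_succ_mul_qpoch (hq₀ : 0 < q) (hq₁ : q ≠ 1) (r : ℕ) (hx : 2 * (x + 1) ≤ n) :
    qRacahWeight q n (x + 1) * (qpoch (q ^ (-((x + 1 : ℕ) : ℤ))) q r *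
        qpoch (q ^ (((x + 1 : ℕ) : ℤ) - n - 1)) q r) =
      qbinom q n (x + 1) * (qpoch (q ^ (-((x + 1 : ℕ) : ℤ))) q r *
          qpoch (q ^ (((x + 1 : ℕ) : ℤ) - n)) q r) -
        qbinom q n x * (qpoch (q ^ (-(x : ℤ))) q r * qpoch (q ^ ((x : ℤ) - n)) q r) := by
  obtain ⟨s, rfl⟩ : ∃ s, n = x + 1 + (x + 1 + s) := ⟨n - 2 * (x + 1), by omega⟩
  have hq1 : q - 1 ≠ 0 := sub_ne_zero.2 hq₁
  have hint : qint q (x + 1 + s + 1) ≠ 0 := (qint_pos hq₀.le (Nat.succ_ne_zero _)).ne'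
  have hbinom := qbinom_mul_qint hq₀.le x (x + 1 + s)
  have hlow := qint_mul_qpoch_zpow_neg hq₀.ne' x r
  have hhigh := qint_mul_qpoch_zpow_neg hq₀.ne' (x + 1 + s) r
  have hs := qint_mul_sub_one q (s + 1)
  rw [qRacahWeight, show x + 1 + (x + 1 + s) - 2 * (x + 1) + 1 = s + 1 by omega,
    show x + 1 + (x + 1 + s) - (x + 1) + 1 = x + 1 + s + 1 by omega,
    show ((x + 1 : ℕ) : ℤ) - (x + 1 + (x + 1 + s) : ℕ) - 1 = -((x + 1 + s + 1 : ℕ) : ℤ) by omega,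
    show ((x + 1 : ℕ) : ℤ) - (x + 1 + (x + 1 + s) : ℕ) = -((x + 1 + s : ℕ) : ℤ) by omega,
    show (x : ℤ) - (x + 1 + (x + 1 + s) : ℕ) = -((x + 1 + s + 1 : ℕ) : ℤ) by omega]
  generalize qpoch (q ^ (-((x + 1 : ℕ) : ℤ))) q r = A at *
  generalize qpoch (q ^ (-((x + 1 + s + 1 : ℕ) : ℤ))) q r = B at *
  generalize qbinom q (x + 1 + (x + 1 + s)) (x + 1) = C at *
  field_simp
  apply mul_left_cancel₀ hq1
  rw [show q ^ (x + 1 + s + 1) = q ^ (x + 1) * q ^ (s + 1) by ring] at hhigh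
  linear_combination C * q ^ (x + 1) * A * B * hs - C * A * hhigh +
    qpoch (q ^ (-(x : ℤ))) q r * B * (q - 1) * hbinom + C * B * hlow

lemma sum_qRacahWeight_mul_qpoch (hq₀ : 0 < q) (hq₁ : q ≠ 1) (r : ℕ) (hm : 2 * m ≤ n) :
    ∑ x ∈ Finset.range (m + 1), qRacahWeight q n x *
        (qpoch (q ^ (-(x : ℤ))) q r * qpoch (q ^ ((x : ℤ) - n - 1)) q r) =
      qbinom q n m * (qpoch (q ^ (-(m : ℤ))) q r * qpoch (q ^ ((m : ℤ) - n)) q r) := by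
  induction m with
  | zero =>
    have hint : qint q (n + 1) ≠ 0 := (qint_pos hq₀.le n.succ_ne_zero).ne'
    obtain _ | r := r
    · simp [qRacahWeight, qpoch_zero, hint]
    · have hvanish := qpoch_zpow_neg_eq_zero hq₀.ne' r.succ_pos
      simp only [Finset.sum_range_one, zero_add, hvanish, zero_mul, mul_zero]
  | succ m ih =>
    rw [Finset.sum_range_succ, ih (by omega), qRacahWeight_succ_mul_qpoch hq₀ hq₁ r hm]
    ring

lemma sum_qRacahWeight_mul_qRacahSum (hq₀ : 0 < q) (hq₁ : q ≠ 1) (hm : 2 * m ≤ n) (hM : M ≤ m) :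
    ∑ x ∈ Finset.range (m + 1), qRacahWeight q n x * qRacahSum q n m M N x =
      qbinom q n m / qbinom q (M + N) M := by
  rw [div_eq_mul_inv, ← sum_twoPhiOneTerm_eq_inv_qbinom hq₀ hq₁ M N, Finset.mul_sum]
  simp only [qRacahSum_eq_sum_range_min hq₀.ne', Finset.mul_sum]
  rw [Finset.sum_comm]
  refine Finset.sum_congr rfl fun r hr => ?_
  have hr : r < min M N + 1 := Finset.mem_range.1 hr
  have hden : qpoch (q ^ (-(m : ℤ))) q r ≠ 0 := qpoch_zpow_ne_zero hq₀ hq₁ (by omega)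
  have hden' : qpoch (q ^ ((m : ℤ) - n)) q r ≠ 0 := qpoch_zpow_ne_zero hq₀ hq₁ (by omega)
  simp only [hypTerm_eq_twoPhiOneTerm_mul, ← mul_div_assoc,
    mul_left_comm _ (twoPhiOneTerm _ _ _ _ _)]
  rw [← Finset.sum_div, ← Finset.mul_sum, sum_qRacahWeight_mul_qpoch hq₀ hq₁ r hm]
  field_simp

theorem pq_nonneg (hq₀ : 0 < q) (hq₁ : q ≠ 1) (hl : m + k ≤ n + l) (hlk : l ≤ k) (hxm : x ≤ m)
    (hxn : x + m ≤ n) : 0 ≤ pq q n m k l x := by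
  rw [pq_eq_qRacahWeight_mul_qRacahSum]
  refine mul_nonneg (div_nonneg (qbinom_pos hq₀.le ?_).le (qbinom_pos hq₀.le ?_).le)
    (mul_nonneg (qRacahWeight_nonneg hq₀.le ?_) (qRacahSum_nonneg hq₀ hq₁ ?_ ?_ hxm hxn)) <;> omega

theorem sum_pq_eq_one (hq₀ : 0 < q) (hq₁ : q ≠ 1) (hm : 2 * m ≤ n) (hl : m + k ≤ n + l)
    (hlm : l ≤ m) : ∑ x ∈ Finset.range (m + 1), pq q n m k l x = 1 := by
  have hbinom : qbinom q (n - k) (m - l) ≠ 0 := (qbinom_pos hq₀.le (by omega)).ne'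
  have hbinom' : qbinom q n m ≠ 0 := (qbinom_pos hq₀.le (by omega)).ne'
  simp only [pq_eq_qRacahWeight_mul_qRacahSum, ← Finset.mul_sum]
  rw [sum_qRacahWeight_mul_qRacahSum hq₀ hq₁ hm (by omega),
    show m - l + (n + l - m - k) = n - k by omega]
  field_simp

theorem qRacah_distribution_prime_power_general (hq₀ : 0 < q) (hq₁ : q ≠ 1) (hm : m ≤ n / 2)
    (hl : m + k ≤ n + l) (hlm : l ≤ m) (hlk : l ≤ k) (hx : x ≤ m) :
    0 ≤ pq q n m k l x ∧ ∑ y ∈ Finset.range (m + 1), pq q n m k l y = 1 :=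
  ⟨pq_nonneg hq₀ hq₁ hl hlk hx (by omega), sum_pq_eq_one hq₀ hq₁ (by omega) hl hlm⟩

end qRacah

/-- **Main Theorem, case (1): `q` a prime power.**
If `q ≥ 2` is an integer power of a prime, then for parameters `(n,m,k,l)` as in the
context and every `x ∈ {0,…,m}` one has `p(x;q) ≥ 0`; together with
`Σ_{x=0}^{m} p(x;q) = 1`, the function `x ↦ p(x;q)` is the probability mass function
of the `q`-Racah probability distribution on `{0,1,…,m}`. -/
theorem qRacah_distribution_prime_power (q : ℕ) (hq2 : 2 ≤ q) (hq : IsPrimePow q)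
    (n m k l x : ℕ) (hm : m ≤ n / 2) (hk : k ≤ n)
    (hl : m + k ≤ n + l) (hlm : l ≤ m) (hlk : l ≤ k) (hx : x ≤ m) :
    0 ≤ pq (q : ℝ) n m k l x ∧
      ∑ y ∈ Finset.range (m + 1), pq (q : ℝ) n m k l y = 1 := by
  have hq_gt : (1 : ℝ) < q := by exact_mod_cast hq2
  exact qRacah_distribution_prime_power_general (by positivity) hq_gt.ne' hm hl hlm hlk hx
end

section
/- (Racah probability distribution; Theorem 4.3) For every parameter tuple (n,m,k,l) as in the context and every x ∈ {0,1,…,m}, one has p(x) ≥ 0; consequently, since Σ_{x=0}^{m} p(x) = 1, the function x ↦ p(x) is the probability mass function of a probability distribution (the Racah probability distribution P_{n,m,k,l}) on the finite set {0,1,…,m}. -/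
open Finset

/-- The raising factorial `(a)_r = a(a+1)⋯(a+r-1)`, as a rational number. -/
def raise (a : ℤ) (r : ℕ) : ℚ := ∏ i ∈ Finset.range r, ((a : ℚ) + i)

/-- The `r`-th term of the terminating balanced `₄F₃`-series with numerator parameters
`a, b, -M, -N` and denominator parameters `-m, m-n, -M-N`, evaluated at `1`. -/
def hgTerm (n m M N : ℕ) (a b : ℤ) (r : ℕ) : ℚ :=
  (raise a r * raise b r * raise (-(M : ℤ)) r * raise (-(N : ℤ)) r) /
    ((Nat.factorial r : ℚ) * raise (-(m : ℤ)) r * raise ((m : ℤ) - n) r *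
      raise (-(M : ℤ) - N) r)

/-- The `q → 1` limit function `p(x) = p(x | n,m,k,l)` of (4.1), with `M = m - l` and
`N = n - m - k + l`: a Racah polynomial value times a positive factor. -/
def pone (n m k l x : ℕ) : ℚ :=
  (Nat.choose (n - k) (m - l) : ℚ) * ((Nat.choose n x : ℚ) / (Nat.choose n m : ℚ)) *
    (((n : ℚ) - 2 * x + 1) / ((n : ℚ) - x + 1)) *
    ∑ r ∈ Finset.range (min x (min (m - l) (n + l - m - k)) + 1),
      hgTerm n m (m - l) (n + l - m - k) (-(x : ℤ)) ((x : ℤ) - n - 1) r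

/-!
Write `n = a + b` with `a = m` and `b = n - m`, and `p(x) = (n + 1 - 2x) q(x)`. With `M`, `N` fixed,
the contiguous relation
`(a + b - 2x) q_{a+1,b}(x+1) = (a - x) q_{a,b}(x+1) + (b - x) q_{a,b}(x)`
says that `p_{a+1,b}` is the image of `p_{a,b}` under the Markov kernel which moves `x` to `x + 1`
with probability `(b - x) / (n + 1 - 2x)` and keeps it with probability `(a + 1 - x) / (n + 1 - 2x)`
(the Clebsch-Gordan rule for adjoining one spin-½ particle). Exchanging `(M, a)` with `(N, b)`
does not change `q`, so `b` can be raised in the same way, and the induction starts at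
`a = M`, `b = N`, where `p` is the point mass at `0`: its other values are `d`-th finite differences
of polynomials of degree `d - 1`.
-/

open scoped Nat

section Factorials

/-- The reciprocal `1 / (x - r)!`, read as `0` when `r > x`. It is written with a falling
factorial, which vanishes in that case, rather than with a truncated subtraction. -/
def invFactorialSub (x r : ℕ) : ℚ := (x.descFactorial r : ℚ) / x !

lemma cast_factorial_ne_zero (n : ℕ) : (n ! : ℚ) ≠ 0 :=
  Nat.cast_ne_zero.mpr (Nat.factorial_ne_zero n)

lemma cast_descFactorial_eq_div {n r : ℕ} (h : r ≤ n) :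
    (n.descFactorial r : ℚ) = n ! / (n - r)! := by
  rw [eq_div_iff (cast_factorial_ne_zero _), mul_comm]
  exact_mod_cast Nat.factorial_mul_descFactorial h

lemma invFactorialSub_of_le {x r : ℕ} (h : r ≤ x) :
    invFactorialSub x r = 1 / (x - r)! := by
  have := cast_factorial_ne_zero x
  rw [invFactorialSub, cast_descFactorial_eq_div h]
  field_simp

lemma invFactorialSub_of_lt {x r : ℕ} (h : x < r) : invFactorialSub x r = 0 := by
  rw [invFactorialSub, Nat.descFactorial_of_lt h, Nat.cast_zero, zero_div]

lemma sub_mul_invFactorialSub_succ (x r : ℕ) :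
    ((x : ℚ) + 1 - r) * invFactorialSub (x + 1) r = invFactorialSub x r := by
  rcases le_or_gt r x with hr | hr
  · rw [invFactorialSub_of_le hr, invFactorialSub_of_le (Nat.le_succ_of_le hr),
      Nat.succ_sub hr, Nat.factorial_succ]
    have := cast_factorial_ne_zero (x - r)
    have : ((x - r : ℕ) : ℚ) + 1 ≠ 0 := by positivity
    push_cast [hr] at this ⊢
    field_simp
    ring
  · rw [invFactorialSub_of_lt hr]
    rcases (Nat.succ_le_of_lt hr).eq_or_lt with rfl | hr
    · push_cast; ring
    · rw [invFactorialSub_of_lt hr, mul_zero]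

lemma sum_neg_one_pow_mul_choose_mul_descFactorial {n d j : ℕ} (hj : j < d) (hd : d ≤ n) :
    ∑ r ∈ range (d + 1), (-1 : ℤ) ^ r * d.choose r * (n - r).descFactorial j = 0 := by
  have hdeg : (descPochhammer ℤ j).natDegree < d := by rwa [descPochhammer_natDegree]
  have hdiff := congrFun (Polynomial.fwdDiff_iter_eq_zero_of_degree_lt hdeg) ((n - d : ℕ) : ℤ)
  rw [fwdDiff_iter_eq_sum_shift, ← sum_range_reflect] at hdiff
  refine (sum_congr rfl fun r hr => ?_).trans hdiff
  have hr : r ≤ d := mem_range_succ_iff.mp hr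
  rw [show d + 1 - 1 - r = d - r by lia, Nat.sub_sub_self hr, Nat.choose_symm hr, nsmul_one,
    ← Nat.cast_add, show n - d + (d - r) = n - r by lia, descPochhammer_eval_eq_descFactorial]
  simp

end Factorials

section Density

/-- The `r`-th term of the series defining `racahDensity`. -/
def racahTerm (M N a b x r : ℕ) : ℚ :=
  (-1) ^ r * ((M + N - r)! / ((M - r)! * (N - r)! * r !)) * ((a - r)! * (b - r)!) *
    (invFactorialSub x r * invFactorialSub (a + b + 1 - x) r)

/-- The density `q` of the Racah distribution with respect to the weights `n + 1 - 2x`, that is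
`p(x) = (n + 1 - 2x) q(x)`, in the parameters `M`, `N`, `a = m`, `b = n - m`. -/
def racahDensity (M N a b x : ℕ) : ℚ := ∑ r ∈ range (min M N + 1), racahTerm M N a b x r

variable {M N a b x : ℕ}

lemma racahDensity_comm (M N a b x : ℕ) : racahDensity M N a b x = racahDensity N M b a x := by
  unfold racahDensity racahTerm
  rw [min_comm M N, add_comm M N, add_comm a b]
  exact sum_congr rfl fun r _ => by ring

lemma racahTerm_succ_succ {r : ℕ} (hr : r ≤ a) (hx : x ≤ a + b) :
    ((a : ℚ) + b - 2 * x) * racahTerm M N (a + 1) b (x + 1) r =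
      ((a : ℚ) - x) * racahTerm M N a b (x + 1) r + ((b : ℚ) - x) * racahTerm M N a b x r := by
  have hlow := sub_mul_invFactorialSub_succ x r
  have hhigh := sub_mul_invFactorialSub_succ (a + b - x) r
  simp only [racahTerm]
  rw [show a + 1 + b + 1 - (x + 1) = a + b - x + 1 by lia,
    show a + b + 1 - (x + 1) = a + b - x by lia, show a + b + 1 - x = a + b - x + 1 by lia,
    Nat.succ_sub hr, Nat.factorial_succ, ← hlow, ← hhigh]
  push_cast [hr, hx]
  ring

lemma racahTerm_succ_zero (M N a b r : ℕ) :
    ((a : ℚ) + b + 2) * racahTerm M N (a + 1) b 0 r = ((a : ℚ) + 1) * racahTerm M N a b 0 r := by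
  rcases r.eq_zero_or_pos with rfl | hpos
  · have hhigh := sub_mul_invFactorialSub_succ (a + b + 1) 0
    simp only [racahTerm, Nat.sub_zero]
    rw [show a + 1 + b + 1 = a + b + 1 + 1 by ring, Nat.factorial_succ, ← hhigh]
    push_cast
    ring
  · simp only [racahTerm, invFactorialSub_of_lt hpos, zero_mul, mul_zero]

lemma racahDensity_succ_succ (hM : M ≤ a) (hx : x ≤ a + b) :
    ((a : ℚ) + b - 2 * x) * racahDensity M N (a + 1) b (x + 1) =
      ((a : ℚ) - x) * racahDensity M N a b (x + 1) + ((b : ℚ) - x) * racahDensity M N a b x := by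
  simp only [racahDensity, mul_sum, ← sum_add_distrib]
  refine sum_congr rfl fun r hr => racahTerm_succ_succ ?_ hx
  have := mem_range_succ_iff.mp hr
  lia

lemma racahDensity_succ_zero (M N a b : ℕ) :
    ((a : ℚ) + b + 2) * racahDensity M N (a + 1) b 0 =
      ((a : ℚ) + 1) * racahDensity M N a b 0 := by
  simp only [racahDensity, mul_sum, racahTerm_succ_zero]

lemma racahDensity_eq_sum_range {B : ℕ} (hB : min x (min M N) ≤ B) (hBMN : B ≤ min M N) :
    racahDensity M N a b x = ∑ r ∈ range (B + 1), racahTerm M N a b x r := by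
  refine (sum_subset (range_mono (by lia)) fun r hr hrB => ?_).symm
  rw [mem_range] at hr hrB
  rw [racahTerm, invFactorialSub_of_lt (by lia), zero_mul, mul_zero]

lemma racahDensity_self_zero (M N : ℕ) : ((M : ℚ) + N + 1) * racahDensity M N M N 0 = 1 := by
  have hterm : racahDensity M N M N 0 = racahTerm M N M N 0 0 := by
    rw [racahDensity_eq_sum_range (B := 0) (by simp) (Nat.zero_le _), sum_range_one]
  have := cast_factorial_ne_zero M
  have := cast_factorial_ne_zero N
  have := cast_factorial_ne_zero (M + N)
  have : (M : ℚ) + N + 1 ≠ 0 := by positivity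
  rw [hterm, racahTerm, invFactorialSub_of_le le_rfl, invFactorialSub_of_le (Nat.zero_le _)]
  simp only [Nat.sub_zero, Nat.factorial_zero, Nat.factorial_succ, pow_zero]
  push_cast
  field_simp

lemma racahTerm_self {r : ℕ} (hr : r ≤ x + 1) (hx : x + r ≤ M + N) :
    racahTerm M N M N (x + 1) r =
      ((-1) ^ r * (x + 1).choose r * (M + N - r).descFactorial x) / (x + 1)! := by
  have := cast_factorial_ne_zero (M - r)
  have := cast_factorial_ne_zero (N - r)
  have := cast_factorial_ne_zero (x + 1)
  rw [racahTerm, invFactorialSub_of_le hr, invFactorialSub_of_le (by lia),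
    cast_descFactorial_eq_div (by lia), Nat.cast_choose ℚ hr,
    show M + N + 1 - (x + 1) - r = M + N - r - x by lia]
  field_simp

lemma racahDensity_self_succ (hM : x + 1 ≤ M) (hN : x + 1 ≤ N) :
    racahDensity M N M N (x + 1) = 0 := by
  have hdiff : ∑ r ∈ range (x + 1 + 1),
      (-1 : ℚ) ^ r * (x + 1).choose r * (M + N - r).descFactorial x = 0 := by
    exact_mod_cast sum_neg_one_pow_mul_choose_mul_descFactorial x.lt_succ_self
      (by lia : x + 1 ≤ M + N)
  rw [racahDensity_eq_sum_range (B := x + 1) (by lia) (by lia)]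
  calc ∑ r ∈ range (x + 1 + 1), racahTerm M N M N (x + 1) r
      = (∑ r ∈ range (x + 1 + 1),
          (-1 : ℚ) ^ r * (x + 1).choose r * (M + N - r).descFactorial x) / (x + 1)! := by
        rw [sum_div]
        refine sum_congr rfl fun r hr => ?_
        have hr : r ≤ x + 1 := mem_range_succ_iff.mp hr
        exact racahTerm_self hr (by lia)
    _ = 0 := by rw [hdiff, zero_div]

end Density

section Distribution

/-- The assertion that `x ↦ (a + b + 1 - 2x) * racahDensity M N a b x` is a probability mass
function on `{0, …, min a b}`; the weights `a + b + 1 - 2x` are positive there. -/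
def IsRacahDistribution (M N a b : ℕ) : Prop :=
  (∀ x ≤ min a b, 0 ≤ racahDensity M N a b x) ∧
    ∑ x ∈ range (min a b + 1), ((a : ℚ) + b + 1 - 2 * x) * racahDensity M N a b x = 1

variable {M N a b : ℕ}

lemma isRacahDistribution_comm : IsRacahDistribution M N a b ↔ IsRacahDistribution N M b a := by
  unfold IsRacahDistribution
  simp only [racahDensity_comm M N a b, min_comm a b, add_comm (a : ℚ) b]

lemma isRacahDistribution_self (M N : ℕ) : IsRacahDistribution M N M N := by
  refine ⟨fun x hx => ?_, ?_⟩
  · cases x with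
    | zero =>
      have hmul : 0 ≤ ((M : ℚ) + N + 1) * racahDensity M N M N 0 :=
        (racahDensity_self_zero M N).symm ▸ zero_le_one
      exact nonneg_of_mul_nonneg_right hmul (by positivity)
    | succ x => exact (racahDensity_self_succ (by lia) (by lia)).ge
  · rw [sum_range_succ', sum_eq_zero fun x hx => ?_]
    · simpa using racahDensity_self_zero M N
    · rw [mem_range] at hx
      rw [racahDensity_self_succ (by lia) (by lia), mul_zero]

lemma racahDensity_succ_left_nonneg (hM : M ≤ a)
    (hq : ∀ x ≤ min a b, 0 ≤ racahDensity M N a b x) {x : ℕ} (hx : x ≤ min (a + 1) b) :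
    0 ≤ racahDensity M N (a + 1) b x := by
  cases x with
  | zero =>
    have hmul := racahDensity_succ_zero M N a b
    have hq0 := hq 0 (Nat.zero_le _)
    exact nonneg_of_mul_nonneg_right (hmul ▸ by positivity) (by positivity : (0 : ℚ) < a + b + 2)
  | succ x =>
    have hxa : (x : ℚ) ≤ a := by exact_mod_cast (by lia : x ≤ a)
    have hxb : (x : ℚ) + 1 ≤ b := by exact_mod_cast (by lia : x + 1 ≤ b)
    have hstay : 0 ≤ ((a : ℚ) - x) * racahDensity M N a b (x + 1) := by
      rcases (by lia : x ≤ a).eq_or_lt with rfl | hlt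
      · simp
      · exact mul_nonneg (by linarith) (hq _ (by lia))
    have hmove : 0 ≤ ((b : ℚ) - x) * racahDensity M N a b x :=
      mul_nonneg (by linarith) (hq _ (by lia))
    refine nonneg_of_mul_nonneg_right (a := (a : ℚ) + b - 2 * x) ?_ (by linarith)
    rw [racahDensity_succ_succ hM (by lia)]
    exact add_nonneg hstay hmove

/- The Markov kernel moves mass from `x` only to `x` and `x + 1`, so of the old mass at `B` only the
part that stays put is counted. -/
lemma sum_range_racahDensity_succ_left (hM : M ≤ a) {B : ℕ} (hB : B ≤ a + b + 1) :
    ∑ x ∈ range (B + 1), ((a : ℚ) + b + 2 - 2 * x) * racahDensity M N (a + 1) b x =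
      ∑ x ∈ range B, ((a : ℚ) + b + 1 - 2 * x) * racahDensity M N a b x +
        ((a : ℚ) + 1 - B) * racahDensity M N a b B := by
  induction B with
  | zero => simpa using racahDensity_succ_zero M N a b
  | succ B ih =>
    rw [sum_range_succ, ih (by lia), sum_range_succ]
    have hrec := racahDensity_succ_succ (N := N) hM (by lia : B ≤ a + b)
    push_cast
    linear_combination hrec

lemma sum_racahDensity_succ_left (hM : M ≤ a) :
    ∑ x ∈ range (min (a + 1) b + 1), ((a : ℚ) + b + 2 - 2 * x) * racahDensity M N (a + 1) b x =
      ∑ x ∈ range (min a b + 1), ((a : ℚ) + b + 1 - 2 * x) * racahDensity M N a b x := by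
  rw [sum_range_racahDensity_succ_left hM (by lia)]
  rcases lt_or_ge a b with hab | hba
  · rw [min_eq_left (Nat.succ_le_of_lt hab), min_eq_left hab.le]
    push_cast
    ring
  · rw [min_eq_right (Nat.le_succ_of_le hba), min_eq_right hba, sum_range_succ]
    ring

lemma IsRacahDistribution.succ_left (h : IsRacahDistribution M N a b) (hM : M ≤ a) :
    IsRacahDistribution M N (a + 1) b := by
  refine ⟨fun x hx => racahDensity_succ_left_nonneg hM h.1 hx, ?_⟩
  refine (sum_congr rfl fun x _ => ?_).trans ((sum_racahDensity_succ_left hM).trans h.2)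
  push_cast
  ring

lemma IsRacahDistribution.of_le_left (h : IsRacahDistribution M N M b) (hM : M ≤ a) :
    IsRacahDistribution M N a b :=
  Nat.le_induction h (fun _ hMa ih => ih.succ_left hMa) a hM

lemma isRacahDistribution_of_le (hM : M ≤ a) (hN : N ≤ b) : IsRacahDistribution M N a b :=
  have hraise_b : IsRacahDistribution N M b M := (isRacahDistribution_self N M).of_le_left hN
  (isRacahDistribution_comm.mp hraise_b).of_le_left hM

end Distribution

section HypergeometricSeries

lemma raise_neg_natCast (a r : ℕ) : raise (-(a : ℤ)) r = (-1) ^ r * a.descFactorial r := by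
  rw [← descPochhammer_eval_eq_descFactorial, descPochhammer_eval_eq_prod_range, raise]
  nth_rewrite 2 [← card_range r]
  rw [← prod_const, ← prod_mul_distrib]
  refine prod_congr rfl fun i _ => ?_
  push_cast
  ring

lemma hgTerm_eq_descFactorial {a b M N x : ℕ} (hx : x ≤ a + b) (r : ℕ) :
    hgTerm (a + b) a M N (-(x : ℤ)) ((x : ℤ) - (a + b : ℕ) - 1) r =
      (-1) ^ r * (x.descFactorial r * (a + b + 1 - x).descFactorial r) *
        (M.descFactorial r * N.descFactorial r / (r ! * (M + N).descFactorial r)) /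
        (a.descFactorial r * b.descFactorial r) := by
  rw [hgTerm, show (x : ℤ) - (a + b : ℕ) - 1 = -((a + b + 1 - x : ℕ) : ℤ) by lia,
    show (a : ℤ) - (a + b : ℕ) = -(b : ℤ) by lia, show -(M : ℤ) - N = -((M + N : ℕ) : ℤ) by lia]
  simp only [raise_neg_natCast]
  rcases neg_one_pow_eq_or ℚ r with hsign | hsign <;> rw [hsign] <;> ring

lemma choose_mul_descFactorial_div {M N r : ℕ} (hM : r ≤ M) (hN : r ≤ N) :
    ((M + N).choose M : ℚ) *
        (M.descFactorial r * N.descFactorial r / (r ! * (M + N).descFactorial r)) =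
      (M + N - r)! / ((M - r)! * (N - r)! * r !) := by
  have := cast_factorial_ne_zero M
  have := cast_factorial_ne_zero N
  have := cast_factorial_ne_zero (M + N)
  rw [Nat.cast_add_choose, cast_descFactorial_eq_div hM, cast_descFactorial_eq_div hN,
    cast_descFactorial_eq_div (by lia : r ≤ M + N)]
  field_simp

lemma one_div_choose_mul_descFactorial {a b r : ℕ} (ha : r ≤ a) (hb : r ≤ b) :
    1 / ((a + b).choose a * (a.descFactorial r * b.descFactorial r) : ℚ) =
      (a - r)! * (b - r)! / (a + b)! := by
  have := cast_factorial_ne_zero a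
  have := cast_factorial_ne_zero b
  rw [Nat.cast_add_choose, cast_descFactorial_eq_div ha, cast_descFactorial_eq_div hb]
  field_simp

lemma choose_div_mul_descFactorial {n x : ℕ} (hx : x ≤ n) (r : ℕ) :
    (n.choose x : ℚ) / ((n : ℚ) - x + 1) * (x.descFactorial r * (n + 1 - x).descFactorial r) =
      n ! * (invFactorialSub x r * invFactorialSub (n + 1 - x) r) := by
  have := cast_factorial_ne_zero x
  have := cast_factorial_ne_zero (n - x)
  have : ((n - x : ℕ) : ℚ) + 1 ≠ 0 := by positivity
  rw [invFactorialSub, invFactorialSub, Nat.cast_choose ℚ hx, Nat.succ_sub hx, Nat.factorial_succ,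
    ← Nat.cast_sub hx]
  push_cast [-Nat.cast_sub]
  field_simp

lemma choose_mul_hgTerm {a b M N x r : ℕ} (hM : M ≤ a) (hN : N ≤ b) (hx : x ≤ a + b)
    (hr : r ≤ min M N) :
    ((M + N).choose M : ℚ) * ((a + b).choose x / (a + b).choose a) *
        ((((a + b : ℕ) : ℚ) - 2 * x + 1) / (((a + b : ℕ) : ℚ) - x + 1)) *
        hgTerm (a + b) a M N (-(x : ℤ)) ((x : ℤ) - (a + b : ℕ) - 1) r =
      ((a : ℚ) + b + 1 - 2 * x) * racahTerm M N a b x r := by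
  have hfact := cast_factorial_ne_zero (a + b)
  have hMN := choose_mul_descFactorial_div (hr.trans (min_le_left M N))
    (hr.trans (min_le_right M N))
  have hab := one_div_choose_mul_descFactorial (by lia : r ≤ a) (by lia : r ≤ b)
  have hxn := choose_div_mul_descFactorial hx r
  rw [hgTerm_eq_descFactorial hx, racahTerm, ← hMN]
  calc _ = ((a : ℚ) + b + 1 - 2 * x) * (-1) ^ r *
        ((M + N).choose M *
          (M.descFactorial r * N.descFactorial r / (r ! * (M + N).descFactorial r))) *
        (1 / ((a + b).choose a * (a.descFactorial r * b.descFactorial r))) *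
        ((a + b).choose x / (((a + b : ℕ) : ℚ) - x + 1) *
          (x.descFactorial r * (a + b + 1 - x).descFactorial r)) := by
        push_cast
        ring
    _ = _ := by
        rw [hab, hxn]
        field_simp

lemma pone_eq_mul_racahDensity {a b k l x : ℕ} (hl : a + k ≤ a + b + l) (hla : l ≤ a)
    (hlk : l ≤ k) (hx : x ≤ a + b) :
    pone (a + b) a k l x =
      ((a : ℚ) + b + 1 - 2 * x) * racahDensity (a - l) (a + b + l - a - k) a b x := by
  rw [racahDensity_eq_sum_range le_rfl (min_le_right x _), mul_sum, pone, mul_sum,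
    show a + b - k = (a - l) + (a + b + l - a - k) by lia]
  refine sum_congr rfl fun r hr => choose_mul_hgTerm (by lia) (by lia) hx ?_
  exact (mem_range_succ_iff.mp hr).trans (min_le_right x _)

end HypergeometricSeries

theorem racah_distribution_general
    (n m k l x : ℕ) (hl : m + k ≤ n + l) (hlm : l ≤ m) (hlk : l ≤ k) (hx : x ≤ min m (n - m)) :
    0 ≤ pone n m k l x ∧ ∑ y ∈ range (min m (n - m) + 1), pone n m k l y = 1 := by
  obtain ⟨b, rfl⟩ := Nat.exists_eq_add_of_le (by lia : m ≤ n)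
  rw [Nat.add_sub_cancel_left] at hx ⊢
  obtain ⟨hnonneg, hsum⟩ : IsRacahDistribution (m - l) (m + b + l - m - k) m b :=
    isRacahDistribution_of_le (by lia) (by lia)
  have hpone : ∀ y ≤ min m b, pone (m + b) m k l y =
      ((m : ℚ) + b + 1 - 2 * y) * racahDensity (m - l) (m + b + l - m - k) m b y :=
    fun y hy => pone_eq_mul_racahDensity hl hlm hlk (by lia)
  refine ⟨?_, ?_⟩
  · have hweight : 2 * (x : ℚ) ≤ m + b := by exact_mod_cast (by lia : 2 * x ≤ m + b)
    rw [hpone x hx]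
    exact mul_nonneg (by linarith) (hnonneg x hx)
  · rw [← hsum]
    exact sum_congr rfl fun y hy => hpone y (mem_range_succ_iff.mp hy)

/-- **Theorem 4.3 (Racah probability distribution).**
For every parameter tuple `(n,m,k,l)` as in the context and every `x ∈ {0,…,m}`,
`p(x) ≥ 0`; together with `Σ_{x=0}^{m} p(x) = 1`, the function `x ↦ p(x)` is the
probability mass function of the Racah probability distribution on `{0,1,…,m}`. -/
theorem racah_distribution
    (n m k l x : ℕ) (hm : m ≤ n / 2) (hk : k ≤ n)
    (hl : m + k ≤ n + l) (hlm : l ≤ m) (hlk : l ≤ k) (hx : x ≤ m) :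
    0 ≤ pone n m k l x ∧ ∑ y ∈ Finset.range (m + 1), pone n m k l y = 1 := by
  have hmin : min m (n - m) = m := min_eq_left (by lia)
  simpa only [hmin] using racah_distribution_general n m k l x hl hlm hlk (hmin.symm ▸ hx)
end

section
/- (Support of the Racah distribution; Proposition 5.2) For every parameter tuple (n,m,k,l) as in the context and every x ∈ {0,1,…,m}, one has p(x) > 0 if and only if x ≤ min(k,m); equivalently (since x ≤ m always), p(x) > 0 if and only if x ≤ k, and p(x) = 0 for k < x ≤ m. -/
open Finset

/-!
Write `m' = n - m`. The contiguous relation that shifts the denominator parameter `-m` of the series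
expresses the value at `(m + 1, m', x + 1)` as a combination of the values at `(m, m', x + 1)` and
`(m, m', x)`; its coefficients are nonnegative for `x + 1 ≤ min (m + 1) m'`, and the one of
`(m, m', x)` is positive. Hence raising `m` by one moves the right end of the support by exactly
one, and the symmetry `(m, M) ↔ (m', N)` gives the same for `m'`. Starting from `m = M`, `m' = N`,
where the series is a `₂F₁` that telescopes to `0` for `x ≥ 1`, the support after `k` steps is
`{0, …, k}`.
-/

theorem nonneg_and_pos_iff_of_mul_eq_add {R : Type*} [Ring R] [LinearOrder R]
    [IsStrictOrderedRing R] {c d s t v : R} (h : d * s = t + c * v) (hd : 0 < d) (hc : 0 < c)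
    (ht : 0 ≤ t) (hv : 0 ≤ v) (htv : 0 < t → 0 < v) : 0 ≤ s ∧ (0 < s ↔ 0 < v) := by
  rw [← mul_nonneg_iff_of_pos_left hd, ← mul_pos_iff_of_pos_left hd, h]
  refine ⟨add_nonneg ht (mul_nonneg hc.le hv), fun hs => ?_, fun hv_pos => ?_⟩
  · by_contra hv_pos
    have hv_zero : v = 0 := hv.antisymm' (not_lt.mp hv_pos)
    rw [hv_zero, mul_zero, add_zero] at hs
    exact hv_pos (htv hs)
  · exact add_pos_of_nonneg_of_pos ht (mul_pos hc hv_pos)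

section Pochhammer

theorem ascPochhammer_succ_eval_left {S : Type*} [CommSemiring S] (n : ℕ) (a : S) :
    (ascPochhammer S (n + 1)).eval a = a * (ascPochhammer S n).eval (a + 1) := by
  simp [ascPochhammer_succ_left, Polynomial.eval_comp]

theorem ascPochhammer_eval_eq_prod_range {S : Type*} [CommSemiring S] (n : ℕ) (a : S) :
    (ascPochhammer S n).eval a = ∏ i ∈ range n, (a + i) := by
  induction n with
  | zero => simp
  | succ n ih => rw [ascPochhammer_succ_eval, ih, prod_range_succ]

theorem ascPochhammer_eval_neg_natCast_ne_zero {R : Type*} [CommRing R] [IsDomain R] [CharZero R]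
    {j r : ℕ} (h : r ≤ j) : (ascPochhammer R r).eval (-(j : R)) ≠ 0 := by
  rw [ne_eq, ascPochhammer_eval_eq_zero_iff]
  rintro ⟨i, hir, hij⟩
  rw [neg_neg, Nat.cast_inj] at hij
  omega

variable {K : Type*} [Field K]

theorem ascPochhammer_eval_contiguous {a b e : K} {r : ℕ}
    (he : (ascPochhammer K (r + 1)).eval e ≠ 0) :
    e * (a - b) * ((ascPochhammer K r).eval a * (ascPochhammer K r).eval b /
        (ascPochhammer K r).eval e) =
      b * (a - e) * ((ascPochhammer K r).eval a * (ascPochhammer K r).eval (b + 1) /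
        (ascPochhammer K r).eval (e + 1)) +
      a * (e - b) * ((ascPochhammer K r).eval (a + 1) * (ascPochhammer K r).eval b /
        (ascPochhammer K r).eval (e + 1)) := by
  have shift (c : K) : c * (ascPochhammer K r).eval (c + 1) =
      (ascPochhammer K r).eval c * (c + r) := by
    rw [← ascPochhammer_succ_eval_left, ascPochhammer_succ_eval]
  have he_ne : (ascPochhammer K r).eval e ≠ 0 := by
    rw [ascPochhammer_succ_eval] at he
    exact left_ne_zero_of_mul he
  have he_succ_ne : (ascPochhammer K r).eval (e + 1) ≠ 0 := by
    rw [ascPochhammer_succ_eval_left] at he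
    exact right_ne_zero_of_mul he
  field_simp
  linear_combination
    (ascPochhammer K r).eval a * (ascPochhammer K r).eval b * (a - b) * shift e -
      (a - e) * (ascPochhammer K r).eval a * (ascPochhammer K r).eval e * shift b -
      (e - b) * (ascPochhammer K r).eval b * (ascPochhammer K r).eval e * shift a

theorem sum_range_ascPochhammer_eval_div [CharZero K] (a b : K) {R : ℕ}
    (h : (ascPochhammer K R).eval (a + b + 1) ≠ 0) :
    ∑ r ∈ range (R + 1), (ascPochhammer K r).eval a * (ascPochhammer K r).eval b /
        (r.factorial * (ascPochhammer K r).eval (a + b + 1)) =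
      (ascPochhammer K R).eval (a + 1) * (ascPochhammer K R).eval (b + 1) /
        (R.factorial * (ascPochhammer K R).eval (a + b + 1)) := by
  induction R with
  | zero => simp
  | succ R ih =>
    rw [ascPochhammer_succ_eval] at h
    obtain ⟨hR, hc⟩ := mul_ne_zero_iff.mp h
    have hfact : (R.factorial : K) ≠ 0 := Nat.cast_ne_zero.mpr R.factorial_ne_zero
    have hR_succ : (R : K) + 1 ≠ 0 := Nat.cast_add_one_ne_zero R
    rw [sum_range_succ, ih hR, ascPochhammer_succ_eval_left R a, ascPochhammer_succ_eval_left R b,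
      ascPochhammer_succ_eval R (a + 1), ascPochhammer_succ_eval R (b + 1),
      ascPochhammer_succ_eval R (a + b + 1), Nat.factorial_succ]
    push_cast
    field_simp
    ring

end Pochhammer

theorem raise_eq_ascPochhammer_eval (a : ℤ) (r : ℕ) :
    raise a r = (ascPochhammer ℚ r).eval (a : ℚ) :=
  (ascPochhammer_eval_eq_prod_range r (a : ℚ)).symm

theorem raise_neg_natCast_eq_zero {j r : ℕ} (h : j < r) : raise (-(j : ℤ)) r = 0 := by
  simpa [raise_eq_ascPochhammer_eval] using ascPochhammer_eval_neg_coe_nat_of_lt (R := ℚ) h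

theorem raise_neg_natCast_ne_zero {j r : ℕ} (h : r ≤ j) : raise (-(j : ℤ)) r ≠ 0 := by
  simpa [raise_eq_ascPochhammer_eval] using ascPochhammer_eval_neg_natCast_ne_zero (R := ℚ) h

theorem hgTerm_neg_natCast_eq_zero (n m M N : ℕ) (b : ℤ) {x r : ℕ} (h : x < r) :
    hgTerm n m M N (-(x : ℤ)) b r = 0 := by
  simp [hgTerm, raise_neg_natCast_eq_zero h]

theorem hgTerm_contiguous (n M N : ℕ) (a b : ℤ) {m r : ℕ} (hr : r ≤ m) :
    (m + 1) * (a - b) * hgTerm (n + 1) (m + 1) M N a b r =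
      -b * (a + m + 1) * hgTerm n m M N a (b + 1) r +
        a * (m + 1 + b) * hgTerm n m M N (a + 1) b r := by
  have hne : (ascPochhammer ℚ (r + 1)).eval (-((m + 1 : ℕ) : ℚ)) ≠ 0 :=
    ascPochhammer_eval_neg_natCast_ne_zero (by omega)
  have hcontig := ascPochhammer_eval_contiguous (a := (a : ℚ)) (b := (b : ℚ)) hne
  have hm : -((m + 1 : ℕ) : ℚ) + 1 = -m := by push_cast; ring
  have hmn : ((m : ℚ) + 1 - (n + 1)) = m - n := by ring
  rw [hm] at hcontig
  simp only [hgTerm, raise_eq_ascPochhammer_eval]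
  push_cast at hcontig ⊢
  rw [hmn]
  linear_combination (-(ascPochhammer ℚ r).eval (-(M : ℚ)) * (ascPochhammer ℚ r).eval (-(N : ℚ)) /
    (r.factorial * (ascPochhammer ℚ r).eval ((m : ℚ) - n) *
      (ascPochhammer ℚ r).eval (-(M : ℚ) - N))) * hcontig

theorem hgTerm_self {M N r : ℕ} (a b : ℤ) (hM : r ≤ M) (hN : r ≤ N) :
    hgTerm (M + N) M M N a b r =
      raise a r * raise b r / (r.factorial * raise (-(M : ℤ) - N) r) := by
  have hM_ne : raise (-(M : ℤ)) r ≠ 0 := raise_neg_natCast_ne_zero hM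
  have hN_ne : raise (-(N : ℤ)) r ≠ 0 := raise_neg_natCast_ne_zero hN
  have hMN : (M : ℤ) - (M + N : ℕ) = -N := by push_cast; ring
  rw [hgTerm, hMN]
  field_simp

/-- The value at `x` of the `₄F₃`-series in `pone`, with `m'` standing for `n - m`. The sum runs up
to `min M N` independently of `x`, so that recurrences in `x` can be checked term by term. -/
def racahSum (m m' M N x : ℕ) : ℚ :=
  ∑ r ∈ range (min M N + 1), hgTerm (m + m') m M N (-(x : ℤ)) (x - (m + m') - 1) r

theorem sum_range_min_hgTerm {n m : ℕ} (hmn : m ≤ n) (M N x : ℕ) :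
    ∑ r ∈ range (min x (min M N) + 1), hgTerm n m M N (-(x : ℤ)) ((x : ℤ) - n - 1) r =
      racahSum m (n - m) M N x := by
  obtain ⟨m', rfl⟩ := Nat.exists_eq_add_of_le hmn
  rw [racahSum, Nat.add_sub_cancel_left]
  push_cast
  refine sum_subset (range_mono (by omega)) fun r hr hrx => hgTerm_neg_natCast_eq_zero _ _ _ _ _ ?_
  rw [mem_range] at hr hrx
  omega

theorem racahSum_comm (m m' M N x : ℕ) : racahSum m m' M N x = racahSum m' m N M x := by
  rw [racahSum, racahSum, min_comm, add_comm (m : ℤ)]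
  refine sum_congr rfl fun r _ => ?_
  have hm : (m : ℤ) - (m + m' : ℕ) = -m' := by push_cast; ring
  have hm' : (m' : ℤ) - (m' + m : ℕ) = -m := by push_cast; ring
  rw [hgTerm, hgTerm, hm, hm', neg_sub_left, neg_sub_left, add_comm (N : ℤ)]
  ring

theorem racahSum_zero (m m' M N : ℕ) : racahSum m m' M N 0 = 1 := by
  rw [racahSum, sum_range_succ', sum_eq_zero fun r _ =>
    hgTerm_neg_natCast_eq_zero _ _ _ _ _ r.succ_pos]
  simp [hgTerm, raise]

theorem racahSum_succ (m' N y : ℕ) {m M : ℕ} (hM : M ≤ m) :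
    ((m : ℚ) + 1) * (m + m' - 2 * y) * racahSum (m + 1) m' M N (y + 1) =
      (m + m' + 1 - y) * (m - y) * racahSum m m' M N (y + 1) +
        (y + 1) * (m' - y) * racahSum m m' M N y := by
  simp only [racahSum, mul_sum, ← sum_add_distrib]
  refine sum_congr rfl fun r hr => ?_
  have hrm : r ≤ m := by
    rw [mem_range] at hr
    omega
  have hcontig := hgTerm_contiguous (m + m') M N (-((y + 1 : ℕ) : ℤ)) (y - (m + m') - 1) hrm
  have hy : -((y + 1 : ℕ) : ℤ) + 1 = -y := by push_cast; ring
  have hb : (y : ℤ) - (m + m') - 1 + 1 = (y + 1 : ℕ) - (m + m') - 1 := by push_cast; ring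
  have hb' : ((y + 1 : ℕ) : ℤ) - ((m + 1 : ℕ) + m') - 1 = y - (m + m') - 1 := by push_cast; ring
  rw [hy, hb] at hcontig
  rw [hb', add_right_comm m 1 m']
  push_cast at hcontig ⊢
  linear_combination hcontig

theorem racahSum_self_eq_zero {M N x : ℕ} (hx : 0 < x) (hxM : x ≤ M) (hxN : x ≤ N) :
    racahSum M N M N x = 0 := by
  set a : ℚ := -x with ha
  set b : ℚ := x - (M + N) - 1 with hb
  have hab : -(M : ℚ) - N = a + b + 1 := by rw [ha, hb]; ring
  have hterm : ∀ r ∈ range (min M N + 1),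
      hgTerm (M + N) M M N (-(x : ℤ)) (x - (M + N) - 1) r =
        (ascPochhammer ℚ r).eval a * (ascPochhammer ℚ r).eval b /
          (r.factorial * (ascPochhammer ℚ r).eval (a + b + 1)) := by
    intro r hr
    rw [mem_range] at hr
    rw [hgTerm_self _ _ (by omega) (by omega)]
    simp only [raise_eq_ascPochhammer_eval]
    push_cast
    rw [hab]
  have hne : (ascPochhammer ℚ (min M N)).eval (a + b + 1) ≠ 0 := by
    rw [← hab, ← neg_add', ← Nat.cast_add]
    exact ascPochhammer_eval_neg_natCast_ne_zero (by omega)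
  have hzero : (ascPochhammer ℚ (min M N)).eval (a + 1) = 0 := by
    have hax : a + 1 = -((x - 1 : ℕ) : ℚ) := by rw [ha, Nat.cast_pred hx]; ring
    rw [hax]
    exact ascPochhammer_eval_neg_coe_nat_of_lt (by omega)
  rw [racahSum, sum_congr rfl hterm, sum_range_ascPochhammer_eval_div a b hne, hzero, zero_mul,
    zero_div]

/-- The support statement for `racahSum`, for all admissible `x` at once so that it can be carried
through an induction on `m` and `m'`: the sum is nonnegative, and positive exactly up to
`k = m + m' - M - N`. -/
def HasRacahSupport (m m' M N : ℕ) : Prop :=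
  ∀ x, x ≤ m → x ≤ m' →
    0 ≤ racahSum m m' M N x ∧ (0 < racahSum m m' M N x ↔ M + N + x ≤ m + m')

theorem HasRacahSupport.symm {m m' M N : ℕ} (h : HasRacahSupport m m' M N) :
    HasRacahSupport m' m N M := by
  intro x hxm' hxm
  rw [racahSum_comm, add_comm N, add_comm m']
  exact h x hxm hxm'

theorem hasRacahSupport_self (M N : ℕ) : HasRacahSupport M N M N := by
  intro x hxM hxN
  obtain rfl | hx := x.eq_zero_or_pos
  · simp [racahSum_zero]
  · rw [racahSum_self_eq_zero hx hxM hxN]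
    exact ⟨le_rfl, by simp [hx.ne']⟩

theorem HasRacahSupport.succ_left {m m' M N : ℕ} (hM : M ≤ m) (hN : N ≤ m')
    (h : HasRacahSupport m m' M N) : HasRacahSupport (m + 1) m' M N := by
  rintro (_ | y) hym hym'
  · rw [racahSum_zero]
    exact ⟨zero_le_one, iff_of_true one_pos (by omega)⟩
  obtain ⟨hy_nonneg, hy_pos⟩ := h y (by omega) (by omega)
  have hym_cast : (y : ℚ) ≤ m := by exact_mod_cast Nat.le_of_succ_le_succ hym
  have hym'_cast : (y : ℚ) + 1 ≤ m' := by exact_mod_cast hym'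
  have hden : 0 < ((m : ℚ) + 1) * (m + m' - 2 * y) := mul_pos (by positivity) (by linarith)
  have hcoeff : 0 < ((y : ℚ) + 1) * (m' - y) := mul_pos (by positivity) (by linarith)
  have htop : 0 ≤ ((m : ℚ) + m' + 1 - y) * (m - y) * racahSum m m' M N (y + 1) ∧
      (0 < ((m : ℚ) + m' + 1 - y) * (m - y) * racahSum m m' M N (y + 1) →
        0 < racahSum m m' M N y) := by
    obtain rfl | hym_ne := eq_or_ne y m
    -- For `y = m` the induction hypothesis says nothing at `y + 1`, but the coefficient vanishes.
    · simp
    have hcoeff_nonneg : 0 ≤ ((m : ℚ) + m' + 1 - y) * (m - y) :=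
      mul_nonneg (by linarith [y.cast_nonneg (α := ℚ)]) (by linarith)
    obtain ⟨hsucc_nonneg, hsucc_pos⟩ := h (y + 1) (by omega) hym'
    refine ⟨mul_nonneg hcoeff_nonneg hsucc_nonneg, fun hpos => hy_pos.mpr ?_⟩
    have hsucc_le := hsucc_pos.mp (pos_of_mul_pos_right hpos hcoeff_nonneg)
    omega
  obtain ⟨hnonneg, hpos⟩ := nonneg_and_pos_iff_of_mul_eq_add (racahSum_succ m' N y hM)
    hden hcoeff htop.1 hy_nonneg htop.2
  exact ⟨hnonneg, hpos.trans (hy_pos.trans (by omega))⟩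

theorem hasRacahSupport {m m' M N : ℕ} (hM : M ≤ m) (hN : N ≤ m') :
    HasRacahSupport m m' M N := by
  have hleft : HasRacahSupport m N M N := by
    induction m, hM using Nat.le_induction with
    | base => exact hasRacahSupport_self M N
    | succ m hM ih => exact ih.succ_left hM le_rfl
  induction m', hN using Nat.le_induction with
  | base => exact hleft
  | succ m' hN ih => exact (ih.symm.succ_left hN hM).symm

theorem racah_support_general
    (n m k l x : ℕ) (hl : m + k ≤ n + l) (hlm : l ≤ m) (hlk : l ≤ k)
    (hx : x ≤ m) (hxn : x ≤ n - m) :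
    (0 < pone n m k l x ↔ x ≤ min k m) ∧ (k < x → pone n m k l x = 0) := by
  have h2x : (2 : ℚ) * x ≤ n := by exact_mod_cast (by omega : 2 * x ≤ n)
  have hfactor : 0 < ((n - k).choose (m - l) : ℚ) * ((n.choose x : ℚ) / (n.choose m : ℚ)) *
      (((n : ℚ) - 2 * x + 1) / ((n : ℚ) - x + 1)) := by
    have hchoose : 0 < (n - k).choose (m - l) := Nat.choose_pos (by omega)
    have hchoose_x : 0 < n.choose x := Nat.choose_pos (by omega)
    have hchoose_m : 0 < n.choose m := Nat.choose_pos (by omega)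
    have hratio := div_pos (by linarith : 0 < (n : ℚ) - 2 * x + 1)
      (by linarith [x.cast_nonneg (α := ℚ)] : 0 < (n : ℚ) - x + 1)
    positivity
  obtain ⟨hnonneg, hpos⟩ :=
    hasRacahSupport (m := m) (m' := n - m) (M := m - l) (N := n + l - m - k)
      (by omega) (by omega) x hx hxn
  rw [pone, sum_range_min_hgTerm (by omega), mul_pos_iff_of_pos_left hfactor, hpos]
  refine ⟨by omega, fun hkx => ?_⟩
  rw [hnonneg.antisymm' (not_lt.mp (hpos.not.mpr (by omega))), mul_zero]

/-- **Proposition 5.2 (support of the Racah distribution).**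
For every parameter tuple `(n,m,k,l)` as in the context and every `x ∈ {0,…,m}`,
`p(x) > 0` if and only if `x ≤ min(k,m)`; equivalently `p(x) > 0` iff `x ≤ k`,
and `p(x) = 0` for `k < x ≤ m`. -/
theorem racah_support
    (n m k l x : ℕ) (hm : m ≤ n / 2) (hk : k ≤ n)
    (hl : m + k ≤ n + l) (hlm : l ≤ m) (hlk : l ≤ k) (hx : x ≤ m) :
    (0 < pone n m k l x ↔ x ≤ min k m) ∧ (k < x → pone n m k l x = 0) := by
  exact racah_support_general n m k l x hl hlm hlk hx (by omega)
end
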